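/- arXiv:1309.5701 — 4 statements merged into one kernel-verified Lean document; each statement's English description precedes it below -/
import Mathlib

section
/- Let G be an invertible real r×r matrix with columns g_1, …, g_r. Then for every real symmetric positive definite r×r matrix L satisfying g_jᵀ L g_j ≤ 1 for all j = 1, …, r, one has det L ≤ det (GGᵀ)⁻¹. Consequently, (GGᵀ)⁻¹ is an optimal solution of the origin-centered MVEE problem Q(S) for any finite symmetric point set S containing ±g_1, …, ±g_r whose other points p all satisfy pᵀ (GGᵀ)⁻¹ p ≤ 1. -/
open Matrix

noncomputable def euclNorm {n : ℕ} (v : Fin n → ℝ) : ℝ := Real.sqrt (∑ i, v i ^ 2)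

noncomputable def oneNorm {n : ℕ} (v : Fin n → ℝ) : ℝ := ∑ i, |v i|

noncomputable def specNorm {d m : ℕ} (M : Matrix (Fin d) (Fin m) ℝ) : ℝ :=
  ‖LinearMap.toContinuousLinearMap (Matrix.toEuclideanLin M)‖

noncomputable def sigmaMin {d r : ℕ} (M : Matrix (Fin d) (Fin r) ℝ) : ℝ :=
  sInf ((fun x => euclNorm (M *ᵥ x)) '' {x : Fin r → ℝ | euclNorm x = 1})


theorem det_le_one_aux {r : ℕ} (M : Matrix (Fin r) (Fin r) ℝ) (hM : M.PosDef)
    (hd : ∀ j, M j j ≤ 1) : M.det ≤ 1 := by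
  have h1 : M.det = ∏ i, hM.isHermitian.eigenvalues i := by
    simpa using hM.isHermitian.det_eq_prod_eigenvalues
  have h2 : M.trace = ∑ i, hM.isHermitian.eigenvalues i := by
    simpa using hM.isHermitian.trace_eq_sum_eigenvalues
  have h3 : M.trace ≤ ∑ _i : Fin r, (1 : ℝ) := Finset.sum_le_sum fun i _ => hd i
  rw [h1]
  calc ∏ i, hM.isHermitian.eigenvalues i
      ≤ ∏ i, Real.exp (hM.isHermitian.eigenvalues i - 1) := by
        apply Finset.prod_le_prod
        · intro i _
          exact (hM.eigenvalues_pos i).le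
        · intro i _
          have := Real.add_one_le_exp (hM.isHermitian.eigenvalues i - 1)
          linarith
    _ = Real.exp (∑ i, (hM.isHermitian.eigenvalues i - 1)) := (Real.exp_sum _ _).symm
    _ ≤ 1 := by
        rw [Real.exp_le_one_iff, Finset.sum_sub_distrib, ← h2]
        linarith

/-- optimality of `(G Gᵀ)⁻¹` for the origin-centered MVEE problem. -/
theorem stmt1 (r : ℕ) (G : Matrix (Fin r) (Fin r) ℝ) (hG : IsUnit G)
    (S : Set (Fin r → ℝ)) (hSfin : S.Finite)
    (hSsym : ∀ x ∈ S, -x ∈ S)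
    (hgS : ∀ j : Fin r, (fun i => G i j) ∈ S ∧ (-(fun i => G i j) : Fin r → ℝ) ∈ S)
    (hother : ∀ p ∈ S, p ⬝ᵥ ((G * Gᵀ)⁻¹ *ᵥ p) ≤ 1) :
    (∀ L : Matrix (Fin r) (Fin r) ℝ, L.PosDef →
      (∀ j : Fin r, (fun i => G i j) ⬝ᵥ (L *ᵥ fun i => G i j) ≤ 1) →
      L.det ≤ ((G * Gᵀ)⁻¹).det) ∧
    ((G * Gᵀ)⁻¹).PosDef ∧
    (∀ p ∈ S, p ⬝ᵥ ((G * Gᵀ)⁻¹ *ᵥ p) ≤ 1) ∧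
    (∀ L : Matrix (Fin r) (Fin r) ℝ, L.PosDef →
      (∀ p ∈ S, p ⬝ᵥ (L *ᵥ p) ≤ 1) → L.det ≤ ((G * Gᵀ)⁻¹).det) := by
  have hdet : G.det ≠ 0 := ((Matrix.isUnit_iff_isUnit_det G).1 hG).ne_zero
  have key : ∀ L : Matrix (Fin r) (Fin r) ℝ, L.PosDef →
      (∀ j : Fin r, (fun i => G i j) ⬝ᵥ (L *ᵥ fun i => G i j) ≤ 1) →
      L.det ≤ ((G * Gᵀ)⁻¹).det := by
    intro L hL hj
    have hM : (Gᵀ * L * G).PosDef := by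
      have := hL.conjTranspose_mul_mul_same (B := G) (Matrix.mulVec_injective_of_isUnit hG)
      simpa [Matrix.conjTranspose_eq_transpose_of_trivial] using this
    have h := det_le_one_aux _ hM (fun j => by
      have e : (Gᵀ * L * G) j j = (fun i => G i j) ⬝ᵥ (L *ᵥ fun i => G i j) := by
        rw [Matrix.mul_assoc]
        rfl
      rw [e]
      exact hj j)
    rw [Matrix.det_mul, Matrix.det_mul, Matrix.det_transpose] at h
    rw [Matrix.det_nonsing_inv, Matrix.det_mul, Matrix.det_transpose, Ring.inverse_eq_inv',
      ← one_div, le_div_iff₀ (mul_self_pos.2 hdet)]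
    linarith
  refine ⟨key, ?_, hother, fun L hL h => key L hL fun j => h _ (hgS j).1⟩
  apply Matrix.PosDef.inv
  have := Matrix.PosDef.mul_conjTranspose_self G (Matrix.vecMul_injective_of_isUnit hG)
  simpa [Matrix.conjTranspose_eq_transpose_of_trivial] using this
end

section
/- Let A = (F, FK)Π ∈ ℝ^{d×m} be a separable matrix, where F ∈ ℝ^{d×r} has rank r, K ∈ ℝ^{r×(m−r)} is nonnegative with columns of unit 1-norm, and Π is an m×m permutation matrix. Let L = F(FᵀF)⁻²Fᵀ (which equals the Moore–Penrose pseudoinverse of FFᵀ). Then every column a_i of A satisfies a_iᵀ L a_i ≤ 1, and a_iᵀ L a_i = 1 holds if and only if a_i equals one of the columns of F. Consequently, there exists an index set 𝓘 ⊆ {1, …, m} of cardinality r such that a_iᵀ L a_i = 1 for every i ∈ 𝓘 and A(𝓘) = F, where A(𝓘) denotes the submatrix of A consisting of the columns with indices in 𝓘. -/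
open Matrix

theorem gram_isUnit {d r : ℕ} (F : Matrix (Fin d) (Fin r) ℝ) (hF : F.rank = r) :
    IsUnit (Fᵀ * F).det := by
  rw [← Matrix.isUnit_iff_isUnit_det]
  rw [← Matrix.mulVec_injective_iff_isUnit]
  have h : (Fᵀ * F).rank = r := by rw [Matrix.rank_transpose_mul_self, hF]
  have hs : Function.Surjective (Fᵀ * F).mulVecLin := by
    rw [← LinearMap.range_eq_top]
    apply Submodule.eq_top_of_finrank_eq
    simpa [Matrix.rank] using h
  exact LinearMap.injective_iff_surjective.mpr hs

theorem form_eq {d r : ℕ} (F : Matrix (Fin d) (Fin r) ℝ) (hF : F.rank = r) (w : Fin r → ℝ) :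
    (F *ᵥ w) ⬝ᵥ ((F * ((Fᵀ * F)⁻¹ * (Fᵀ * F)⁻¹) * Fᵀ) *ᵥ (F *ᵥ w)) = ∑ a, w a ^ 2 := by
  have hu := gram_isUnit F hF
  have h1 : Fᵀ * ((F * ((Fᵀ * F)⁻¹ * (Fᵀ * F)⁻¹) * Fᵀ) * F) = 1 := by
    calc Fᵀ * ((F * ((Fᵀ * F)⁻¹ * (Fᵀ * F)⁻¹) * Fᵀ) * F)
        = ((Fᵀ * F) * (Fᵀ * F)⁻¹) * ((Fᵀ * F)⁻¹ * (Fᵀ * F)) := by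
          simp only [Matrix.mul_assoc]
      _ = 1 := by rw [Matrix.mul_nonsing_inv _ hu, Matrix.nonsing_inv_mul _ hu, one_mul]
  rw [Matrix.mulVec_mulVec, ← Matrix.vecMul_transpose, ← Matrix.dotProduct_mulVec,
    Matrix.mulVec_mulVec, h1, Matrix.one_mulVec]
  simp [dotProduct, sq]

theorem simplex_sq {r : ℕ} (w : Fin r → ℝ) (h0 : ∀ a, 0 ≤ w a) (h1 : ∑ a, w a = 1) :
    ∑ a, w a ^ 2 ≤ 1 ∧ (∑ a, w a ^ 2 = 1 → ∃ j, w = Pi.single j 1) := by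
  have hle : ∀ a, w a ≤ 1 := fun a => by
    rw [← h1]; exact Finset.single_le_sum (fun b _ => h0 b) (Finset.mem_univ a)
  have hsq : ∀ a ∈ Finset.univ, w a ^ 2 ≤ w a := fun a _ => by nlinarith [h0 a, hle a]
  refine ⟨h1 ▸ Finset.sum_le_sum hsq, fun h => ?_⟩
  have he := (Finset.sum_eq_sum_iff_of_le hsq).1 (h.trans h1.symm)
  obtain ⟨j, hj⟩ : ∃ j, w j ≠ 0 := by
    by_contra! hc
    simp [hc] at h1
  have hj1 : w j = 1 := by
    have := he j (Finset.mem_univ j)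
    exact mul_left_cancel₀ hj (by linarith)
  refine ⟨j, funext fun b => ?_⟩
  by_cases hb : b = j
  · subst hb; simp [hj1]
  · have := Finset.sum_erase_add Finset.univ w (Finset.mem_univ j)
    have h2 : ∑ x ∈ Finset.univ.erase j, w x = 0 := by linarith
    have := (Finset.sum_eq_zero_iff_of_nonneg (fun x _ => h0 x)).1 h2 b (by simp [hb])
    simp [hb, this]

/-- for a separable matrix `A = (F, FK)Π` satisfying Assumption 1 and
`L = F(FᵀF)⁻²Fᵀ`, the columns of `A` lying on the ellipsoid `xᵀLx = 1` are exactly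
the columns of `F`; in particular an index set `𝓘` of cardinality `r` recovering `F`
exists. The column arrangement `(F, FK)Π` is encoded by a bijection
`π : Fin m ≃ Fin r ⊕ Fin ℓ` (where `ℓ = m - r`). -/
theorem stmt4 (d m r ℓ : ℕ)
    (F : Matrix (Fin d) (Fin r) ℝ) (hF : F.rank = r)
    (K : Matrix (Fin r) (Fin ℓ) ℝ) (hKpos : ∀ a i, 0 ≤ K a i)
    (hK1 : ∀ i : Fin ℓ, oneNorm (fun a => K a i) = 1)
    (π : Fin m ≃ (Fin r ⊕ Fin ℓ))
    (A : Matrix (Fin d) (Fin m) ℝ)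
    (hA : ∀ i j, A i j = Sum.elim (fun a => F i a) (fun b => (F * K) i b) (π j))
    (L : Matrix (Fin d) (Fin d) ℝ)
    (hL : L = F * ((Fᵀ * F)⁻¹ * (Fᵀ * F)⁻¹) * Fᵀ) :
    (∀ i : Fin m, (fun c => A c i) ⬝ᵥ (L *ᵥ fun c => A c i) ≤ 1) ∧
    (∀ i : Fin m, (fun c => A c i) ⬝ᵥ (L *ᵥ fun c => A c i) = 1 ↔
      ∃ j : Fin r, (fun c => A c i) = fun c => F c j) ∧
    (∃ I : Finset (Fin m), I.card = r ∧
      (∀ i ∈ I, (fun c => A c i) ⬝ᵥ (L *ᵥ fun c => A c i) = 1) ∧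
      ∃ e : Fin r ↪ Fin m, I = Finset.univ.map e ∧
        ∀ j : Fin r, (fun c => A c (e j)) = fun c => F c j) := by
  subst hL
  have hcol : ∀ j, F *ᵥ Pi.single j 1 = fun c => F c j := fun j => by
    ext c; simp
  have hw : ∀ i : Fin m, ∃ w : Fin r → ℝ, (∀ a, 0 ≤ w a) ∧ ∑ a, w a = 1 ∧
      (fun c => A c i) = F *ᵥ w := by
    intro i
    rcases hi : π i with j | b
    · refine ⟨Pi.single j 1, fun a => ?_, by simp, ?_⟩
      · by_cases h : a = j
        · subst h; simp
        · simp [h]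
      · rw [hcol]; ext c; simp [hA, hi]
    · refine ⟨fun a => K a b, fun a => hKpos a b, ?_, ?_⟩
      · rw [← hK1 b]
        exact Finset.sum_congr rfl fun a _ => (abs_of_nonneg (hKpos a b)).symm
      · ext c; simp [hA, hi, Matrix.mul_apply, Matrix.mulVec, dotProduct]
  have key : ∀ i : Fin m, (∃ j : Fin r, (fun c => A c i) = fun c => F c j) →
      (fun c => A c i) ⬝ᵥ ((F * ((Fᵀ * F)⁻¹ * (Fᵀ * F)⁻¹) * Fᵀ) *ᵥ fun c => A c i) = 1 := by
    rintro i ⟨j, hj⟩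
    rw [hj, ← hcol, form_eq F hF]
    simp [Pi.single_apply]
  refine ⟨fun i => ?_, fun i => ⟨fun h => ?_, key i⟩, ?_⟩
  · obtain ⟨w, h0, h1, h2⟩ := hw i
    rw [h2, form_eq F hF]
    exact (simplex_sq w h0 h1).1
  · obtain ⟨w, h0, h1, h2⟩ := hw i
    rw [h2, form_eq F hF] at h
    obtain ⟨j, rfl⟩ := (simplex_sq w h0 h1).2 h
    exact ⟨j, by rw [h2, hcol]⟩
  · let e : Fin r ↪ Fin m := Function.Embedding.inl.trans π.symm.toEmbedding
    have he : ∀ j : Fin r, (fun c => A c (e j)) = fun c => F c j := fun j => by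
      ext c; simp [hA, e]
    refine ⟨Finset.univ.map e, by simp, ?_, e, rfl, he⟩
    intro i hi
    obtain ⟨j, _, rfl⟩ := Finset.mem_map.1 hi
    exact key _ ⟨j, he j⟩
end

section
/- Let A = (F, FK)Π ∈ ℝ^{d×m}, where F ∈ ℝ^{d×r} has rank r, K ∈ ℝ^{r×ℓ} (ℓ = m − r) is nonnegative with columns k_1, …, k_ℓ of unit 1-norm, and Π is an m×m permutation matrix. Let N ∈ ℝ^{d×m}, Ã = A + N, and let Ã^r be a best rank-r approximation of Ã in the spectral norm. Set N̄ = N − (Ã − Ã^r), write N̄Π⁻¹ = (N̄⁽¹⁾, N̄⁽²⁾) with N̄⁽¹⁾ ∈ ℝ^{d×r} and N̄⁽²⁾ ∈ ℝ^{d×ℓ}, and set N̂ = −N̄⁽¹⁾K + N̄⁽²⁾. Let μ = max_{i=1,…,ℓ} ‖k_i‖_2. Then every column n̂_i of N̂ satisfies ‖n̂_i‖_2 ≤ 2‖N‖_2 (μ + 1). -/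
open Matrix

theorem aux_eucl {n : ℕ} (v : Fin n → ℝ) : euclNorm v = ‖WithLp.toLp 2 v‖ := by
  simp [euclNorm, EuclideanSpace.norm_eq]

theorem aux_mulVec {d m : ℕ} (M : Matrix (Fin d) (Fin m) ℝ) (x : Fin m → ℝ) :
    euclNorm (M *ᵥ x) ≤ specNorm M * euclNorm x := by
  rw [aux_eucl, aux_eucl]
  exact (LinearMap.toContinuousLinearMap (Matrix.toEuclideanLin M)).le_opNorm (WithLp.toLp 2 x)

theorem aux_sub {d m : ℕ} (M P : Matrix (Fin d) (Fin m) ℝ) :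
    specNorm (M - P) ≤ specNorm M + specNorm P := by
  unfold specNorm
  rw [map_sub, map_sub]
  exact norm_sub_le _ _

/-- Lemma 2-b of the paper — the columns `n̂_i` of
`N̂ = −N̄⁽¹⁾K + N̄⁽²⁾` satisfy `‖n̂_i‖₂ ≤ 2‖N‖₂(μ + 1)` where `μ = max_i ‖k_i‖₂`.
The column arrangement `(F, FK)Π` is encoded by a bijection `π : Fin m ≃ Fin r ⊕ Fin ℓ`. -/
theorem stmt6 (d m r ℓ : ℕ)
    (F : Matrix (Fin d) (Fin r) ℝ) (hF : F.rank = r)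
    (K : Matrix (Fin r) (Fin ℓ) ℝ) (hKpos : ∀ a i, 0 ≤ K a i)
    (hK1 : ∀ i : Fin ℓ, oneNorm (fun a => K a i) = 1)
    (π : Fin m ≃ (Fin r ⊕ Fin ℓ))
    (A : Matrix (Fin d) (Fin m) ℝ)
    (hA : ∀ i j, A i j = Sum.elim (fun a => F i a) (fun b => (F * K) i b) (π j))
    (N : Matrix (Fin d) (Fin m) ℝ)
    (Ar : Matrix (Fin d) (Fin m) ℝ) (hAr_rank : Ar.rank ≤ r)
    (hAr_best : ∀ B : Matrix (Fin d) (Fin m) ℝ, B.rank ≤ r →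
      specNorm (A + N - Ar) ≤ specNorm (A + N - B))
    (Nbar : Matrix (Fin d) (Fin m) ℝ) (hNbar : Nbar = N - (A + N - Ar))
    (N1 : Matrix (Fin d) (Fin r) ℝ) (hN1 : ∀ i a, N1 i a = Nbar i (π.symm (Sum.inl a)))
    (N2 : Matrix (Fin d) (Fin ℓ) ℝ) (hN2 : ∀ i b, N2 i b = Nbar i (π.symm (Sum.inr b)))
    (Nhat : Matrix (Fin d) (Fin ℓ) ℝ) (hNhat : Nhat = -(N1 * K) + N2)
    (μ : ℝ) (hμ : μ = ⨆ i : Fin ℓ, euclNorm (fun a => K a i)) :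
    ∀ i : Fin ℓ, euclNorm (fun c => Nhat c i) ≤ 2 * specNorm N * (μ + 1) := by
  intro i
  have hArank : A.rank ≤ r := by
    have h : A = F * Matrix.of (fun a j => Sum.elim (fun b => if a = b then (1:ℝ) else 0)
        (fun b => K a b) (π j)) := by
      ext c j
      rw [hA, Matrix.mul_apply]
      rcases hj : π j with b | b <;> simp [hj, Matrix.mul_apply]
    rw [h]
    exact (Matrix.rank_mul_le_left _ _).trans hF.le
  have h1 : specNorm (A + N - Ar) ≤ specNorm N := by
    simpa using hAr_best A hArank
  have h2 : specNorm Nbar ≤ 2 * specNorm N := by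
    rw [hNbar]
    linarith [aux_sub N (A + N - Ar)]
  set y : Fin r ⊕ Fin ℓ → ℝ :=
    Sum.elim (fun a => -K a i) (fun b => if b = i then 1 else 0) with hy
  have h3 : (fun c => Nhat c i) = Nbar *ᵥ (fun j => y (π j)) := by
    ext c
    have : (Nbar *ᵥ (fun j => y (π j))) c = ∑ s, Nbar c (π.symm s) * y s := by
      rw [Matrix.mulVec, dotProduct]
      exact Fintype.sum_equiv π _ _ (fun j => by simp)
    rw [this, Fintype.sum_sum_type, hNhat]
    simp [hy, Matrix.mul_apply, hN1, hN2]
  have hk : euclNorm (fun a => K a i) ≤ μ := by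
    rw [hμ]
    exact le_ciSup (f := fun i : Fin ℓ => euclNorm (fun a => K a i))
      (Set.finite_range _).bddAbove i
  have hk0 : 0 ≤ euclNorm (fun a => K a i) := Real.sqrt_nonneg _
  have h4 : euclNorm (fun j => y (π j)) ≤ μ + 1 := by
    have e : ∑ j, y (π j) ^ 2 = ∑ a, K a i ^ 2 + 1 := by
      rw [Equiv.sum_comp π (fun s => y s ^ 2), Fintype.sum_sum_type]
      simp [hy]
    have e2 : euclNorm (fun a => K a i) ^ 2 = ∑ a, K a i ^ 2 :=
      Real.sq_sqrt (Finset.sum_nonneg fun _ _ => sq_nonneg _)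
    unfold euclNorm
    rw [e, ← e2]
    apply Real.sqrt_le_iff.mpr
    constructor <;> nlinarith
  rw [h3]
  have hN0 : 0 ≤ specNorm N := norm_nonneg _
  calc _ ≤ specNorm Nbar * euclNorm (fun j => y (π j)) := aux_mulVec _ _
    _ ≤ 2 * specNorm N * (μ + 1) :=
      mul_le_mul h2 h4 (Real.sqrt_nonneg _) (by positivity)
end

section
/- Let p_1, …, p_m ∈ ℝ^ρ and suppose the matrix P = (p_1, …, p_m) ∈ ℝ^{ρ×m} has rank ρ. Let S = {±p_1, …, ±p_m} and let L* be an optimal solution of the origin-centered MVEE problem Q(S). Then Q(S) has at least ρ active points, i.e., the set {i ∈ {1, …, m} : p_iᵀ L* p_i = 1} has cardinality at least ρ. -/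
open Matrix

/-- Lemma 4 of the paper — if `P = (p_1, …, p_m)` has rank `ρ`, then
`Q(S)` has at least `ρ` active points. -/
theorem stmt12 (ρ m : ℕ) (p : Fin m → (Fin ρ → ℝ))
    (P : Matrix (Fin ρ) (Fin m) ℝ) (hP : P = Matrix.of fun i j => p j i)
    (hrank : P.rank = ρ)
    (Lstar : Matrix (Fin ρ) (Fin ρ) ℝ) (hPD : Lstar.PosDef)
    (hfeas : ∀ i : Fin m, p i ⬝ᵥ (Lstar *ᵥ p i) ≤ 1)
    (hopt : ∀ L : Matrix (Fin ρ) (Fin ρ) ℝ, L.PosDef →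
      (∀ i : Fin m, p i ⬝ᵥ (L *ᵥ p i) ≤ 1) → L.det ≤ Lstar.det) :
    ρ ≤ Set.ncard {i : Fin m | p i ⬝ᵥ (Lstar *ᵥ p i) = 1} := by
  by_contra hlt
  push Not at hlt
  classical
  set A : Set (Fin m) := {i : Fin m | p i ⬝ᵥ (Lstar *ᵥ p i) = 1} with hA
  obtain ⟨w, hw0, hw⟩ : ∃ w : Fin ρ → ℝ, w ≠ 0 ∧ ∀ i ∈ A, p i ⬝ᵥ w = 0 := by
    let M : Matrix A (Fin ρ) ℝ := Matrix.of fun i j => p i.1 j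
    have hk : LinearMap.ker M.mulVecLin ≠ ⊥ := by
      apply LinearMap.ker_ne_bot_of_finrank_lt
      rw [Module.finrank_fintype_fun_eq_card, Module.finrank_fintype_fun_eq_card,
        Fintype.card_fin, ← Nat.card_eq_fintype_card, Nat.card_coe_set_eq]
      exact hlt
    obtain ⟨w, hwk, hw0⟩ := Submodule.exists_mem_ne_zero_of_ne_bot hk
    refine ⟨w, hw0, fun i hi => ?_⟩
    have := congrFun (LinearMap.mem_ker.mp hwk) ⟨i, hi⟩
    simpa [M, Matrix.mulVec] using this
  have hquad : ∀ (t : ℝ) (i : Fin m), p i ⬝ᵥ ((Lstar + t • vecMulVec w w) *ᵥ p i)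
      = p i ⬝ᵥ (Lstar *ᵥ p i) + t * (p i ⬝ᵥ w) ^ 2 := by
    intro t i
    rw [Matrix.add_mulVec, dotProduct_add, Matrix.smul_mulVec, dotProduct_smul,
      Matrix.vecMulVec_mulVec]
    simp only [dotProduct_comm w (p i), op_smul_eq_smul, dotProduct_smul, smul_eq_mul]
    ring
  obtain ⟨t, ht, htf⟩ : ∃ t : ℝ, 0 < t ∧
      ∀ i, p i ⬝ᵥ (Lstar *ᵥ p i) + t * (p i ⬝ᵥ w) ^ 2 ≤ 1 := by
    have h1 : ∀ᶠ t : ℝ in nhdsWithin 0 (Set.Ioi 0),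
        ∀ i, p i ⬝ᵥ (Lstar *ᵥ p i) + t * (p i ⬝ᵥ w) ^ 2 ≤ 1 := by
      rw [Filter.eventually_all]
      intro i
      by_cases hi : i ∈ A
      · refine Filter.Eventually.of_forall fun t => ?_
        rw [hw i hi]
        simpa using hfeas i
      · have hlt1 : p i ⬝ᵥ (Lstar *ᵥ p i) < 1 := lt_of_le_of_ne (hfeas i) hi
        apply Filter.Eventually.filter_mono nhdsWithin_le_nhds
        have hc : Continuous fun t : ℝ => p i ⬝ᵥ (Lstar *ᵥ p i) + t * (p i ⬝ᵥ w) ^ 2 := by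
          fun_prop
        have := hc.continuousAt (x := 0) |>.eventually_lt_const (u := 1) (by simpa using hlt1)
        exact this.mono fun t h => h.le
    obtain ⟨t, h, ht⟩ := (h1.and self_mem_nhdsWithin).exists
    exact ⟨t, ht, h⟩
  have hpsd : (t • vecMulVec w w).PosSemidef := by
    have := (Matrix.posSemidef_vecMulVec_self_star w).smul ht.le
    simpa using this
  have hle := hopt (Lstar + t • vecMulVec w w) (hPD.add_posSemidef hpsd)
    (fun i => (hquad t i).trans_le (htf i))
  have hdet : (Lstar + t • vecMulVec w w).det = Lstar.det * (1 + t * (w ⬝ᵥ (Lstar⁻¹ *ᵥ w))) := by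
    have hu : IsUnit Lstar.det := hPD.det_pos.ne'.isUnit
    have := Matrix.det_add_replicateCol_mul_replicateRow (ι := Unit) hu (t • w) w
    rw [← Matrix.vecMulVec_eq, Matrix.smul_vecMulVec] at this
    rw [this]
    congr 1
    rw [Matrix.det_unique, Matrix.add_apply, Matrix.one_apply_eq]
    congr 1
    change (w ᵥ* Lstar⁻¹) ⬝ᵥ (t • w) = _
    rw [dotProduct_smul, ← Matrix.dotProduct_mulVec, smul_eq_mul]
  have hpos : 0 < w ⬝ᵥ (Lstar⁻¹ *ᵥ w) := by
    simpa using hPD.inv.dotProduct_mulVec_pos hw0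
  rw [hdet] at hle
  have := mul_pos hPD.det_pos (mul_pos ht hpos)
  linarith
end
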